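/- Let m ≥ 1, n = 2m+1, and let A₁,…,Aₙ be pairwise commuting bounded self-adjoint operators on a complex Hilbert space H. Define the operator-valued function G(t) = t^{2m−1} ∫_{S^{2m}} cos(tω₁A₁)·cos(tω₂A₂)⋯cos(tωₙAₙ) dσ(ω) (a Bochner integral in the Banach space of bounded operators on H). Then G is m times differentiable in operator norm on (0,∞) and for every t > 0, cos(t·√(A₁²+⋯+Aₙ²)) = (1/(2(2π)^m)) · (D^{m−1}G)′(t). -/

import Mathlib

open MeasureTheory Real

/-- The operator `(Df)(t) = f'(t)/t` for functions with values in a real normed space. -/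
noncomputable def Dop {F : Type*} [NormedAddCommGroup F] [NormedSpace ℝ F]
    (f : ℝ → F) : ℝ → F := fun t => t⁻¹ • deriv f t

/-- `cos (s • T)` defined by its norm-convergent power series
`∑ (-1)^k s^(2k) T^(2k) / (2k)!`. -/
noncomputable def cosOp {H : Type*} [NormedAddCommGroup H] [InnerProductSpace ℂ H]
    (s : ℝ) (T : H →L[ℂ] H) : H →L[ℂ] H :=
  ∑' k : ℕ, (((-1:ℝ)^k * s^(2*k)) / (Nat.factorial (2*k) : ℝ)) • T^(2*k)

/-!
Expand the product of cosines into a multiple series over `k : Fin (2m+1) → ℕ` and integrate term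
by term. The moments of the sphere come from computing the integral of `∏ xᵢ^(2kᵢ) exp (-|x|²)` in
Cartesian and in polar coordinates, and they are such that the multinomial theorem sums all terms
of total degree `j` to a multiple of `S^j`, where `S = ∑ Aᵢ²`. Hence the spherical average is
`F₂ₘ(t)`, where `Fₙ(t)` denotes the Fourier transform of the surface measure of `S^n` evaluated at
a frequency of square `t²S`.

On coefficients, `Γ(s + 1) = s Γ(s)` says that `(t^(n+1) Fₙ₊₂)' = 2π t^n Fₙ`. Therefore each `D`
lowers the dimension of the sphere by two, and so does the last derivative, which reaches the
two-point sphere `S⁰`, where `F₀(t) = 2 cos (t √S)`.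
-/

section CommutingProducts

theorem prod_ofFn_smul {M R : Type*} [CommMonoid M] [Monoid R] [MulAction M R]
    [IsScalarTower M R R] [SMulCommClass M R R] {n : ℕ} (c : Fin n → M) (f : Fin n → R) :
    (List.ofFn fun i => c i • f i).prod = (∏ i, c i) • (List.ofFn f).prod := by
  induction n with
  | zero => simp
  | succ n ih =>
    simp only [List.ofFn_succ, List.prod_cons, Fin.prod_univ_succ, ih, smul_mul_smul_comm]

theorem noncommProd_univ_eq_prod_ofFn {M : Type*} [Monoid M] {n : ℕ} (f : Fin n → M)
    (hf : ((Finset.univ : Finset (Fin n)) : Set (Fin n)).Pairwise (Function.onFun Commute f)) :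
    Finset.univ.noncommProd f hf = (List.ofFn f).prod := by
  simp only [Finset.noncommProd, Fin.univ_def, Multiset.map_coe, Multiset.noncommProd_coe,
    List.ofFn_eq_map]

theorem sum_piAntidiag_smul_prod_ofFn_pow {𝕜 R : Type*} [Field 𝕜] [CharZero 𝕜] [Ring R]
    [Algebra 𝕜 R] {n : ℕ} (b : Fin n → R) (hb : ∀ i j, Commute (b i) (b j)) (j : ℕ) :
    ∑ k ∈ Finset.piAntidiag Finset.univ j,
      (∏ i, ((k i).factorial : 𝕜)⁻¹) • (List.ofFn fun i => b i ^ k i).prod =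
        (j.factorial : 𝕜)⁻¹ • (∑ i, b i) ^ j := by
  rw [Finset.sum_pow_eq_sum_piAntidiag_of_commute _ _ fun i _ l _ _ => hb i l, Finset.smul_sum]
  refine Finset.sum_congr rfl fun k hk => ?_
  have hkj : ∑ i, k i = j := (Finset.mem_piAntidiag.mp hk).1
  have hmul : (∏ i, ((k i).factorial : 𝕜)) * Nat.multinomial Finset.univ k = j.factorial := by
    exact_mod_cast hkj ▸ Nat.multinomial_spec Finset.univ k
  have hne : ∏ i, ((k i).factorial : 𝕜) ≠ 0 :=
    Finset.prod_ne_zero_iff.mpr fun i _ => by exact_mod_cast (k i).factorial_ne_zero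
  have hcoeff : ∏ i, ((k i).factorial : 𝕜)⁻¹ =
      (j.factorial : 𝕜)⁻¹ * Nat.multinomial Finset.univ k := by
    rw [Finset.prod_inv_distrib, ← mul_right_inj' hne, mul_inv_cancel₀ hne, mul_left_comm, hmul,
      inv_mul_cancel₀ (by exact_mod_cast j.factorial_ne_zero)]
  rw [hcoeff, mul_smul, Nat.cast_smul_eq_nsmul, nsmul_eq_mul, noncommProd_univ_eq_prod_ofFn]

end CommutingProducts

section ProductSeries

variable {R : Type*} [NormedRing R] {n : ℕ}

theorem prod_ofFn_consEquiv (f : Fin (n + 1) → ℕ → R) (p : ℕ × (Fin n → ℕ)) :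
    (List.ofFn fun i => f i (Fin.consEquiv (fun _ : Fin (n + 1) => ℕ) p i)).prod =
      f 0 p.1 * (List.ofFn fun i : Fin n => f i.succ (p.2 i)).prod := by
  simp only [Fin.consEquiv_apply, List.ofFn_succ, List.prod_cons, Fin.cons_zero, Fin.cons_succ]

theorem summable_norm_prod_ofFn (f : Fin n → ℕ → R) (hf : ∀ i, Summable fun k => ‖f i k‖) :
    Summable fun k : Fin n → ℕ => ‖(List.ofFn fun i => f i (k i)).prod‖ := by
  induction n with
  | zero => exact .of_finite
  | succ n ih =>
    rw [← (Fin.consEquiv fun _ : Fin (n + 1) => ℕ).summable_iff]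
    simpa only [Function.comp_def, prod_ofFn_consEquiv] using
      (hf 0).mul_norm (ih (fun i => f i.succ) fun i => hf i.succ)

theorem hasSum_prod_ofFn [CompleteSpace R] (f : Fin n → ℕ → R)
    (hf : ∀ i, Summable fun k => ‖f i k‖) :
    HasSum (fun k : Fin n → ℕ => (List.ofFn fun i => f i (k i)).prod)
      (List.ofFn fun i => ∑' k, f i k).prod := by
  induction n with
  | zero => simp
  | succ n ih =>
    have htail := ih (fun i => f i.succ) fun i => hf i.succ
    have hsummable := summable_mul_of_summable_norm (hf 0)
      (summable_norm_prod_ofFn (fun i => f i.succ) fun i => hf i.succ)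
    rw [← (Fin.consEquiv fun _ : Fin (n + 1) => ℕ).hasSum_iff, List.ofFn_succ, List.prod_cons]
    simpa only [Function.comp_def, prod_ofFn_consEquiv] using
      (hf 0).of_norm.hasSum.mul htail hsummable

theorem hasSum_sum_piAntidiag {ι E : Type*} [Fintype ι] [DecidableEq ι] [AddCommGroup E]
    [UniformSpace E] [IsUniformAddGroup E] [CompleteSpace E] [T2Space E] {f : (ι → ℕ) → E} {a : E}
    (hf : HasSum f a) :
    HasSum (fun j => ∑ k ∈ Finset.piAntidiag Finset.univ j, f k) a := by
  convert hf.tsum_fiberwise fun k => ∑ i, k i using 2 with j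
  have hfiber : (fun k : ι → ℕ => ∑ i, k i) ⁻¹' {j} =
      ((Finset.piAntidiag Finset.univ j : Finset (ι → ℕ)) : Set (ι → ℕ)) := by
    ext k
    simp
  rw [hfiber]
  exact (Finset.tsum_subtype' _ f).symm

theorem hasSum_integral_smul_of_norm_le {X ι E : Type*} [MeasurableSpace X] {μ : Measure X}
    [IsFiniteMeasure μ] [Countable ι] [NormedAddCommGroup E] [NormedSpace ℝ E] [CompleteSpace E]
    {g : ι → X → ℝ} {C : ℝ} {v : ι → E} (hg : ∀ i, AEStronglyMeasurable (g i) μ)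
    (hgC : ∀ i x, ‖g i x‖ ≤ C) (hv : Summable fun i => ‖v i‖) :
    HasSum (fun i => (∫ x, g i x ∂μ) • v i) (∫ x, ∑' i, g i x • v i ∂μ) := by
  have hint : ∀ i, Integrable (g i) μ := fun i =>
    (integrable_const C).mono' (hg i) (.of_forall (hgC i))
  simp only [← integral_smul_const]
  refine hasSum_integral_of_summable_integral_norm (fun i => (hint i).smul_const _) ?_
  refine .of_nonneg_of_le (fun i => by positivity) (fun i => ?_) (hv.mul_left (C * μ.real Set.univ))
  simp only [norm_smul, integral_mul_const]
  gcongr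
  calc ∫ x, ‖g i x‖ ∂μ ≤ ∫ _, C ∂μ := integral_mono (hint i).norm (integrable_const C) (hgC i)
    _ = C * μ.real Set.univ := by rw [integral_const, smul_eq_mul, mul_comm]

end ProductSeries

section SphereMoments

open Set

theorem integral_Ioi_pow_mul_exp_neg_sq (q : ℕ) :
    ∫ r in Ioi (0 : ℝ), r ^ q * exp (-r ^ 2) = Gamma ((q + 1) / 2) / 2 := by
  have hq : (-1 : ℝ) < q := neg_one_lt_zero.trans_le q.cast_nonneg
  have h := integral_rpow_mul_exp_neg_rpow (p := 2) two_pos hq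
  simp only [rpow_natCast, rpow_ofNat] at h
  rw [h, one_div_mul_eq_div]

theorem integral_pow_two_mul_mul_exp_neg_sq (k : ℕ) :
    ∫ x : ℝ, x ^ (2 * k) * exp (-x ^ 2) = Gamma (k + 1 / 2) := by
  have habs := integral_comp_abs (f := fun x : ℝ => x ^ (2 * k) * exp (-x ^ 2))
  simp only [sq_abs, (even_two_mul k).pow_abs, integral_Ioi_pow_mul_exp_neg_sq] at habs
  rw [habs, mul_div_cancel₀ _ two_ne_zero, Nat.cast_mul, Nat.cast_two, add_div,
    mul_div_cancel_left₀ _ two_ne_zero]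

theorem integral_volumeIoiPow {F : Type*} [NormedAddCommGroup F] [NormedSpace ℝ F] (d : ℕ)
    (f : ℝ → F) :
    ∫ r, f r ∂Measure.volumeIoiPow d = ∫ r in Ioi (0 : ℝ), r ^ d • f r := by
  simp only [Measure.volumeIoiPow, ENNReal.ofReal]
  rw [integral_withDensity_eq_integral_smul (measurable_subtype_coe.pow_const _).real_toNNReal,
    integral_subtype_comap measurableSet_Ioi fun r ↦ (r ^ d).toNNReal • f r]
  refine setIntegral_congr_fun measurableSet_Ioi fun r hr => ?_
  rw [NNReal.smul_def, coe_toNNReal _ (pow_nonneg hr.out.le _)]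

theorem integral_eq_integral_toSphere_prod_volumeIoiPow {E F : Type*} [NormedAddCommGroup E]
    [NormedSpace ℝ E] [FiniteDimensional ℝ E] [Nontrivial E] [MeasurableSpace E] [BorelSpace E]
    [NormedAddCommGroup F] [NormedSpace ℝ F] (μ : Measure E) [μ.IsAddHaarMeasure] (f : E → F) :
    ∫ x, f x ∂μ = ∫ p : Metric.sphere (0 : E) 1 × Ioi (0 : ℝ), f ((p.2 : ℝ) • (p.1 : E))
      ∂μ.toSphere.prod (.volumeIoiPow (Module.finrank ℝ E - 1)) := by
  have hpunctured : ∫ x, f x ∂μ = ∫ x : ({0}ᶜ : Set E), f x ∂μ.comap Subtype.val := by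
    rw [integral_subtype_comap (measurableSet_singleton _).compl f, restrict_compl_singleton]
  rw [hpunctured, ← μ.measurePreserving_homeomorphUnitSphereProd.integral_comp
    (Homeomorph.measurableEmbedding _)]
  simp only [← homeomorphUnitSphereProd_symm_apply_coe, Homeomorph.symm_apply_apply]

/-- The moment `∫ ∏ᵢ ωᵢ ^ kᵢ dσ(ω)` of the surface measure of the unit sphere of `ℝ^ι`. -/
noncomputable def sphereMoment {ι : Type*} [Fintype ι] (k : ι → ℕ) : ℝ :=
  ∫ ω : Metric.sphere (0 : EuclideanSpace ℝ ι) 1, ∏ i, (ω : EuclideanSpace ℝ ι) i ^ k i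
    ∂(volume : Measure (EuclideanSpace ℝ ι)).toSphere

variable {ι : Type*} [Fintype ι]

theorem integral_prod_pow_two_mul_mul_exp_neg_sq (k : ι → ℕ) :
    ∫ x : EuclideanSpace ℝ ι, ∏ i, (x i ^ (2 * k i) * exp (-x i ^ 2)) =
      ∏ i, Gamma (k i + 1 / 2) := by
  rw [← (PiLp.volume_preserving_toLp ι).integral_comp
    (MeasurableEquiv.toLp 2 _).measurableEmbedding]
  simp only [← integral_pow_two_mul_mul_exp_neg_sq]
  exact integral_fintype_prod_volume_eq_prod fun i (v : ℝ) => v ^ (2 * k i) * exp (-v ^ 2)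

theorem prod_smul_pow_mul_exp_neg_sq (k : ι → ℕ)
    (ω : Metric.sphere (0 : EuclideanSpace ℝ ι) 1) (r : ℝ) :
    ∏ i, ((r • (ω : EuclideanSpace ℝ ι)) i ^ k i *
        exp (-(r • (ω : EuclideanSpace ℝ ι)) i ^ 2)) =
      (∏ i, (ω : EuclideanSpace ℝ ι) i ^ k i) * (r ^ (∑ i, k i) * exp (-r ^ 2)) := by
  have hω : ∑ i, (ω : EuclideanSpace ℝ ι) i ^ 2 = 1 := by
    rw [← EuclideanSpace.real_norm_sq_eq, norm_eq_of_mem_sphere ω, one_pow]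
  simp only [PiLp.smul_apply, smul_eq_mul, mul_pow, Finset.prod_mul_distrib,
    Finset.prod_pow_eq_pow_sum, ← Finset.mul_sum, ← exp_sum, Finset.sum_neg_distrib, hω, mul_one]
  ring

theorem sphereMoment_two_mul [Nonempty ι] (k : ι → ℕ) :
    sphereMoment (fun i => 2 * k i) =
      2 * (∏ i, Gamma (k i + 1 / 2)) / Gamma ((∑ i, k i : ℕ) + Fintype.card ι / 2) := by
  set N := ∑ i, k i with hN
  have hpolar : ∏ i, Gamma (k i + 1 / 2) =
      sphereMoment (fun i => 2 * k i) * (Gamma (N + Fintype.card ι / 2) / 2) := by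
    rw [← integral_prod_pow_two_mul_mul_exp_neg_sq,
      integral_eq_integral_toSphere_prod_volumeIoiPow]
    simp only [prod_smul_pow_mul_exp_neg_sq, ← Finset.mul_sum, ← hN]
    rw [sphereMoment, integral_prod_mul (fun ω : Metric.sphere (0 : EuclideanSpace ℝ ι) 1 =>
        ∏ i, (ω : EuclideanSpace ℝ ι) i ^ (2 * k i))
      fun r : Ioi (0 : ℝ) => (r : ℝ) ^ (2 * N) * exp (-(r : ℝ) ^ 2),
      integral_volumeIoiPow _ fun r => r ^ (2 * N) * exp (-r ^ 2)]
    simp only [finrank_euclideanSpace, smul_eq_mul, ← mul_assoc, ← pow_add,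
      integral_Ioi_pow_mul_exp_neg_sq]
    congr 3
    rw [Nat.cast_add, Nat.cast_sub Fintype.card_pos]
    push_cast
    ring
  have hGamma : Gamma (N + Fintype.card ι / 2) ≠ 0 := (Gamma_pos_of_pos (by positivity)).ne'
  rw [hpolar, eq_div_iff hGamma]
  ring

end SphereMoments

section SphereFourier

/-- The Taylor coefficients of the Fourier transform of the surface measure of the unit sphere
`S^n ⊆ ℝ^(n+1)`, in powers of the squared frequency. -/
noncomputable def sphereFourierCoeff (n j : ℕ) : ℝ :=
  (-1) ^ j * 2 * √π ^ (n + 1) / (4 ^ j * j.factorial * Gamma (j + (n + 1) / 2))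

theorem Gamma_nat_add_half_div_factorial (k : ℕ) :
    Gamma (k + 1 / 2) / (2 * k).factorial = √π / (4 ^ k * k.factorial) := by
  induction k with
  | zero => simp [← Gamma_one_half_eq]
  | succ k ih =>
    rw [div_eq_div_iff (by positivity) (by positivity)] at ih ⊢
    rw [show ((k + 1 : ℕ) : ℝ) + 1 / 2 = (k + 1 / 2) + 1 by push_cast; ring,
      Gamma_add_one (by positivity), mul_add_one 2 k]
    push_cast [Nat.factorial_succ]
    linear_combination (2 * (k : ℝ) + 1) * (2 * (k + 1)) * ih

theorem sphereFourierCoeff_zero_left (j : ℕ) :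
    sphereFourierCoeff 0 j = 2 * ((-1) ^ j / (2 * j).factorial) := by
  have h := Gamma_nat_add_half_div_factorial j
  rw [div_eq_div_iff (by positivity) (by positivity)] at h
  rw [sphereFourierCoeff, Nat.cast_zero, zero_add, zero_add, pow_one, ← mul_div_assoc,
    div_eq_div_iff (by positivity) (by positivity)]
  linear_combination (-2) * (-1) ^ j * h

theorem sphereFourierCoeff_add_two (n j : ℕ) :
    (2 * j + n + 1) * sphereFourierCoeff (n + 2) j = 2 * π * sphereFourierCoeff n j := by
  have hs : (j : ℝ) + ((n + 2 : ℕ) + 1) / 2 = (j + (n + 1) / 2) + 1 := by push_cast; ring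
  simp only [sphereFourierCoeff, hs, Gamma_add_one (show (j : ℝ) + (n + 1) / 2 ≠ 0 by positivity)]
  rw [add_right_comm n 2 1, pow_add _ (n + 1) 2, sq_sqrt pi_pos.le]
  field_simp
  ring

theorem Gamma_le_four_pow_mul_Gamma_add_nat {s : ℝ} (hs : 1 / 4 ≤ s) (j : ℕ) :
    Gamma s ≤ 4 ^ j * Gamma (s + j) := by
  induction j with
  | zero => simp
  | succ j ih =>
    have hsj : 1 ≤ 4 * (s + j) := by linarith [j.cast_nonneg (α := ℝ)]
    have hpos : 0 < s + j := by linarith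
    calc Gamma s ≤ 4 ^ j * Gamma (s + j) := ih
      _ ≤ 4 ^ j * (4 * (s + j) * Gamma (s + j)) := by
        gcongr
        exact le_mul_of_one_le_left (Gamma_pos_of_pos hpos).le hsj
      _ = 4 ^ (j + 1) * Gamma (s + (j + 1 : ℕ)) := by
        rw [Nat.cast_add_one, ← add_assoc, Gamma_add_one hpos.ne']
        ring

theorem abs_sphereFourierCoeff_le (n j : ℕ) :
    |sphereFourierCoeff n j| ≤ sphereFourierCoeff n 0 * (j.factorial : ℝ)⁻¹ := by
  have hΓ : Gamma ((n + 1) / 2) ≤ 4 ^ j * Gamma (j + (n + 1) / 2) := by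
    rw [add_comm (j : ℝ)]
    exact Gamma_le_four_pow_mul_Gamma_add_nat (by linarith [n.cast_nonneg (α := ℝ)]) j
  calc |sphereFourierCoeff n j|
      = 2 * √π ^ (n + 1) / (4 ^ j * Gamma (j + (n + 1) / 2)) * (j.factorial : ℝ)⁻¹ := by
        rw [sphereFourierCoeff, mul_assoc, abs_div, abs_mul, abs_neg_one_pow, one_mul,
          abs_of_pos (by positivity), abs_of_pos (by positivity)]
        field_simp
    _ ≤ 2 * √π ^ (n + 1) / Gamma ((n + 1) / 2) * (j.factorial : ℝ)⁻¹ := by gcongr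
    _ = sphereFourierCoeff n 0 * (j.factorial : ℝ)⁻¹ := by simp [sphereFourierCoeff]

variable {R : Type*} [NormedRing R] [NormedAlgebra ℝ R]

/-- The Fourier transform of the surface measure of `S^n` at a frequency `ξ` with `|ξ|² = t² a`:
an entire function of `|ξ|²`, hence defined for `a` in any Banach algebra. -/
noncomputable def sphereFourier (n : ℕ) (a : R) (t : ℝ) : R :=
  ∑' j, (sphereFourierCoeff n j * t ^ (2 * j)) • a ^ j

theorem summable_norm_sphereFourier (n : ℕ) (a : R) (t : ℝ) :
    Summable fun j => ‖(sphereFourierCoeff n j * t ^ (2 * j)) • a ^ j‖ := by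
  refine .of_nonneg_of_le (fun _ => norm_nonneg _) (fun j => ?_)
    ((NormedSpace.norm_expSeries_summable' (𝕂 := ℝ) (t ^ 2 • a)).mul_left
      (sphereFourierCoeff n 0))
  rw [norm_smul, norm_smul, smul_pow, norm_smul, ← pow_mul, norm_mul, norm_eq_abs, norm_inv,
    norm_natCast, ← mul_assoc, ← mul_assoc]
  gcongr
  exact abs_sphereFourierCoeff_le n j

theorem hasDerivAt_pow_smul_sphereFourier_term (n j : ℕ) (a : R) (t : ℝ) :
    HasDerivAt (fun t => t ^ (n + 1) • (sphereFourierCoeff (n + 2) j * t ^ (2 * j)) • a ^ j)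
      ((2 * π * t ^ n) • (sphereFourierCoeff n j * t ^ (2 * j)) • a ^ j) t := by
  have h := ((hasDerivAt_pow (n + 1 + 2 * j) t).const_mul
    (sphereFourierCoeff (n + 2) j)).smul_const (a ^ j)
  simp only [smul_smul]
  refine (h.congr_deriv ?_).congr_of_eventuallyEq (.of_forall fun s => ?_)
  · rw [add_right_comm n 1, Nat.add_sub_cancel]
    congr 1
    push_cast
    linear_combination t ^ (n + 2 * j) * sphereFourierCoeff_add_two n j
  · ring_nf

theorem hasDerivAt_pow_smul_sphereFourier [CompleteSpace R] (n : ℕ) (a : R) (t : ℝ) :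
    HasDerivAt (fun t => t ^ (n + 1) • sphereFourier (n + 2) a t)
      ((2 * π * t ^ n) • sphereFourier n a t) t := by
  have hsum (n : ℕ) (t : ℝ) : Summable fun j => (sphereFourierCoeff n j * t ^ (2 * j)) • a ^ j :=
    (summable_norm_sphereFourier n a t).of_norm
  have hbound (j : ℕ) (s : ℝ) (hs : s ∈ Metric.ball (0 : ℝ) (|t| + 1)) :
      ‖(2 * π * s ^ n) • (sphereFourierCoeff n j * s ^ (2 * j)) • a ^ j‖ ≤
        ‖2 * π * (|t| + 1) ^ n‖ * ‖(sphereFourierCoeff n j * (|t| + 1) ^ (2 * j)) • a ^ j‖ := by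
    have hs' : ‖s‖ ≤ ‖|t| + 1‖ := (mem_ball_zero_iff.mp hs).le.trans (le_abs_self _)
    simp only [norm_smul, norm_mul, norm_pow]
    gcongr
  have ht : t ∈ Metric.ball (0 : ℝ) (|t| + 1) := mem_ball_zero_iff.mpr (lt_add_one _)
  have h := hasDerivAt_tsum_of_isPreconnected
    ((summable_norm_sphereFourier n a (|t| + 1)).mul_left ‖2 * π * (|t| + 1) ^ n‖)
    Metric.isOpen_ball (convex_ball _ _).isPreconnected
    (fun j s _ => hasDerivAt_pow_smul_sphereFourier_term n j a s) hbound ht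
    ((hsum (n + 2) t).const_smul _) ht
  simpa only [sphereFourier, (hsum _ _).tsum_const_smul] using h

end SphereFourier

section IteratedDop

theorem Dop_const_smul {F : Type*} [NormedAddCommGroup F] [NormedSpace ℝ F] (c : ℝ) (f : ℝ → F) :
    Dop (c • f) = c • Dop f := by
  ext t
  simp only [Dop, Pi.smul_apply, deriv_const_smul_field, smul_comm c]

variable {R : Type*} [NormedRing R] [NormedAlgebra ℝ R] [CompleteSpace R]

theorem Dop_pow_smul_sphereFourier (n : ℕ) (a : R) :
    Dop (fun t => t ^ (n + 3) • sphereFourier (n + 4) a t) =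
      (2 * π) • fun t => t ^ (n + 1) • sphereFourier (n + 2) a t := by
  ext t
  rw [Dop, (hasDerivAt_pow_smul_sphereFourier (n + 2) a t).deriv, Pi.smul_apply, smul_smul,
    smul_smul]
  congr 1
  -- At `t = 0` both sides vanish, the left one because `0⁻¹ = 0`.
  rcases eq_or_ne t 0 with rfl | ht
  · simp
  · rw [inv_mul_eq_iff_eq_mul₀ ht]
    ring

theorem iterate_Dop_pow_smul_sphereFourier (k n : ℕ) (a : R) :
    Dop^[k] (fun t => t ^ (n + 2 * k + 1) • sphereFourier (n + 2 * k + 2) a t) =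
      (2 * π) ^ k • fun t => t ^ (n + 1) • sphereFourier (n + 2) a t := by
  induction k generalizing n with
  | zero => simp
  | succ k ih =>
    have h := ih (n + 2)
    rw [add_right_comm n 2] at h
    rw [Function.iterate_succ_apply', mul_add_one 2 k, ← add_assoc, h, Dop_const_smul,
      Dop_pow_smul_sphereFourier, smul_smul, pow_succ]

theorem hasDerivAt_iterate_Dop_pow_smul_sphereFourier (k n : ℕ) (a : R) (t : ℝ) :
    HasDerivAt (Dop^[k] fun t => t ^ (n + 2 * k + 1) • sphereFourier (n + 2 * k + 2) a t)
      (((2 * π) ^ (k + 1) * t ^ n) • sphereFourier n a t) t := by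
  rw [iterate_Dop_pow_smul_sphereFourier, pow_succ, mul_assoc, mul_smul]
  exact (hasDerivAt_pow_smul_sphereFourier n a t).const_smul _

end IteratedDop

section SphereAverage

variable {R : Type*} [NormedRing R] [NormedAlgebra ℝ R] {n : ℕ}

/-- `cos (s • a)` in a Banach algebra, by its power series; `cosOp` is the case of operators. -/
noncomputable def cosSeries (s : ℝ) (a : R) : R :=
  ∑' k : ℕ, (((-1) ^ k * s ^ (2 * k)) / (Nat.factorial (2 * k) : ℝ)) • a ^ (2 * k)

theorem summable_norm_cosSeries (s : ℝ) (a : R) :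
    Summable fun k : ℕ =>
      ‖(((-1) ^ k * s ^ (2 * k)) / (Nat.factorial (2 * k) : ℝ)) • a ^ (2 * k)‖ := by
  refine .of_nonneg_of_le (fun _ => norm_nonneg _) (fun k => ?_)
    ((NormedSpace.norm_expSeries_summable' (𝕂 := ℝ) (s • a)).comp_injective
      (mul_right_injective₀ two_ne_zero))
  simp [norm_smul, smul_pow, div_eq_inv_mul, mul_assoc]

theorem prod_cosSeries_mul_eq_tsum [CompleteSpace R] (A : Fin n → R) (t : ℝ) (x : Fin n → ℝ) :
    (List.ofFn fun i => cosSeries (t * x i) (A i)).prod =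
      ∑' k : Fin n → ℕ, (∏ i, x i ^ (2 * k i)) • (List.ofFn fun i =>
        ((-1) ^ k i * t ^ (2 * k i) / (2 * k i).factorial) • A i ^ (2 * k i)).prod := by
  simp only [cosSeries]
  rw [← (hasSum_prod_ofFn _ fun i => summable_norm_cosSeries (t * x i) (A i)).tsum_eq]
  refine tsum_congr fun k => ?_
  have hcoeff (i : Fin n) : (-1) ^ k i * (t * x i) ^ (2 * k i) / (2 * k i).factorial =
      x i ^ (2 * k i) * ((-1) ^ k i * t ^ (2 * k i) / (2 * k i).factorial) := by ring
  simp only [hcoeff, mul_smul, prod_ofFn_smul fun i => x i ^ (2 * k i)]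

theorem norm_prod_pow_le_one_of_mem_sphere {ι : Type*} [Fintype ι] (k : ι → ℕ)
    (ω : Metric.sphere (0 : EuclideanSpace ℝ ι) 1) :
    ‖∏ i, (ω : EuclideanSpace ℝ ι) i ^ k i‖ ≤ 1 := by
  rw [norm_prod]
  refine Finset.prod_le_one (fun i _ => norm_nonneg _) fun i _ => ?_
  rw [norm_pow]
  exact pow_le_one₀ (norm_nonneg _) ((PiLp.norm_apply_le _ i).trans_eq (norm_eq_of_mem_sphere ω))

theorem hasSum_integral_prod_cosSeries [CompleteSpace R] (A : Fin n → R) (t : ℝ) :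
    HasSum
      (fun k : Fin n → ℕ =>
        sphereMoment (fun i => 2 * k i) • (List.ofFn fun i =>
          ((-1) ^ k i * t ^ (2 * k i) / (2 * k i).factorial) • A i ^ (2 * k i)).prod)
      (∫ ω : Metric.sphere (0 : EuclideanSpace ℝ (Fin n)) 1,
        (List.ofFn fun i => cosSeries (t * (ω : EuclideanSpace ℝ (Fin n)) i) (A i)).prod
        ∂(volume : Measure (EuclideanSpace ℝ (Fin n))).toSphere) := by
  simp only [prod_cosSeries_mul_eq_tsum, sphereMoment]
  have hsummable := summable_norm_prod_ofFn _ fun i => summable_norm_cosSeries t (A i)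
  exact hasSum_integral_smul_of_norm_le (fun k => by fun_prop)
    (fun k => norm_prod_pow_le_one_of_mem_sphere fun i => 2 * k i) hsummable

theorem sphereMoment_two_mul_mul_prod_cos_coeff (k : Fin (n + 1) → ℕ) (t : ℝ) :
    sphereMoment (fun i => 2 * k i) * ∏ i, ((-1) ^ k i * t ^ (2 * k i) / (2 * k i).factorial) =
      sphereFourierCoeff n (∑ i, k i) * t ^ (2 * ∑ i, k i) * (∑ i, k i).factorial *
        ∏ i, ((k i).factorial : ℝ)⁻¹ := by
  have hprod : (∏ i, Gamma (k i + 1 / 2)) / ∏ i, ((2 * k i).factorial : ℝ) =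
      √π ^ (n + 1) / 4 ^ (∑ i, k i) * ∏ i, ((k i).factorial : ℝ)⁻¹ := by
    simp only [← Finset.prod_div_distrib, Gamma_nat_add_half_div_factorial]
    rw [Finset.prod_div_distrib, Finset.prod_mul_distrib, Finset.prod_pow_eq_pow_sum,
      Finset.prod_const, Finset.card_univ, Fintype.card_fin, Finset.prod_inv_distrib,
      ← div_div, div_eq_mul_inv _ (∏ i, ((k i).factorial : ℝ))]
  rw [sphereMoment_two_mul, Finset.prod_div_distrib, Finset.prod_mul_distrib,
    Finset.prod_pow_eq_pow_sum, Finset.prod_pow_eq_pow_sum, ← Finset.mul_sum, Fintype.card_fin]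
  generalize ∑ i, k i = N at *
  calc
    _ = 2 * (-1) ^ N * t ^ (2 * N) / Gamma (N + (n + 1) / 2) *
        ((∏ i, Gamma (k i + 1 / 2)) / ∏ i, ((2 * k i).factorial : ℝ)) := by
      push_cast
      ring
    _ = _ := by
      rw [hprod, sphereFourierCoeff]
      field_simp

theorem integral_prod_cosSeries [CompleteSpace R] (A : Fin (n + 1) → R)
    (hcomm : ∀ i j, Commute (A i) (A j)) (t : ℝ) :
    ∫ ω : Metric.sphere (0 : EuclideanSpace ℝ (Fin (n + 1))) 1,
        (List.ofFn fun i => cosSeries (t * (ω : EuclideanSpace ℝ (Fin (n + 1))) i) (A i)).prod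
        ∂(volume : Measure (EuclideanSpace ℝ (Fin (n + 1)))).toSphere =
      sphereFourier n (∑ i, A i ^ 2) t := by
  refine (hasSum_sum_piAntidiag (hasSum_integral_prod_cosSeries A t)).tsum_eq.symm.trans
    (tsum_congr fun j => ?_)
  have hterm : ∀ k ∈ Finset.piAntidiag Finset.univ j,
      sphereMoment (fun i => 2 * k i) • (List.ofFn fun i =>
          ((-1) ^ k i * t ^ (2 * k i) / (2 * k i).factorial) • A i ^ (2 * k i)).prod =
      (sphereFourierCoeff n j * t ^ (2 * j) * j.factorial) •
        (∏ i, ((k i).factorial : ℝ)⁻¹) • (List.ofFn fun i => (A i ^ 2) ^ k i).prod := by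
    intro k hk
    have hkj : ∑ i, k i = j := (Finset.mem_piAntidiag.mp hk).1
    rw [prod_ofFn_smul, smul_smul, sphereMoment_two_mul_mul_prod_cos_coeff, hkj, smul_smul]
    simp only [pow_mul]
  rw [Finset.sum_congr rfl hterm, ← Finset.smul_sum,
    sum_piAntidiag_smul_prod_ofFn_pow _ fun i j => (hcomm i j).pow_pow 2 2, smul_smul,
    mul_inv_cancel_right₀ (by exact_mod_cast j.factorial_ne_zero)]

end SphereAverage

section FunctionalCalculus

theorem hasSum_cfc {𝕜 R ι : Type*} {p : R → Prop} [RCLike 𝕜] [NormedRing R] [StarRing R]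
    [NormedAlgebra 𝕜 R] [ContinuousFunctionalCalculus 𝕜 R p] {f : ι → 𝕜 → 𝕜} {u : ι → ℝ} {a : R}
    (hu : Summable u) (hfu : ∀ i, ∀ x ∈ spectrum 𝕜 a, ‖f i x‖ ≤ u i)
    (hf : ∀ i, ContinuousOn (f i) (spectrum 𝕜 a)) :
    HasSum (fun i => cfc (f i) a) (cfc (fun x => ∑' i, f i x) a) := by
  have h := tendsto_cfc_fun (a := a) (tendstoUniformlyOn_tsum hu hfu)
    (.of_forall fun s => continuousOn_finsetSum s fun i _ => hf i)
  refine h.congr fun s => ?_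
  rw [← cfc_sum _ _ _ fun i _ => hf i, Finset.sum_fn]

variable {R : Type*} [NormedRing R] [NormedAlgebra ℝ R] [StarRing R] {p : R → Prop}
  [ContinuousFunctionalCalculus ℝ R p] {a : R}

theorem cfc_sphereFourier (n : ℕ) (t : ℝ) (ha : p a := by cfc_tac) :
    cfc (fun x : ℝ => sphereFourier n x t) a = sphereFourier n a t := by
  obtain ⟨C, hC⟩ :=
    (ContinuousFunctionalCalculus.isCompact_spectrum (R := ℝ) a).isBounded.exists_norm_le
  have hbound (j : ℕ) (x : ℝ) (hx : x ∈ spectrum ℝ a) :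
      ‖(sphereFourierCoeff n j * t ^ (2 * j)) • x ^ j‖ ≤
        ‖(sphereFourierCoeff n j * t ^ (2 * j)) • C ^ j‖ := by
    rw [norm_smul, norm_smul, norm_pow, norm_pow]
    gcongr
    exact (hC x hx).trans (le_norm_self C)
  refine (hasSum_cfc (summable_norm_sphereFourier n C t) hbound fun j => by
    fun_prop).tsum_eq.symm.trans (tsum_congr fun j => ?_)
  rw [cfc_smul _ _ _ (by fun_prop), cfc_pow_id a j]

theorem sphereFourier_zero_eq_two_mul_cos_mul_sqrt {x : ℝ} (hx : 0 ≤ x) (t : ℝ) :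
    sphereFourier 0 x t = 2 * cos (t * √x) := by
  refine HasSum.tsum_eq (((hasSum_cos (t * √x)).mul_left 2).congr_fun fun j => ?_)
  rw [sphereFourierCoeff_zero_left, mul_pow, pow_mul (√x), sq_sqrt hx, smul_eq_mul]
  ring

theorem two_smul_cfc_cos_mul_sqrt [PartialOrder R] [NonnegSpectrumClass ℝ R] (ha : 0 ≤ a)
    (t : ℝ) (hpa : p a := by cfc_tac) :
    (2 : ℝ) • cfc (fun x => cos (t * √x)) a = sphereFourier 0 a t := by
  rw [← cfc_smul (2 : ℝ) _ a, ← cfc_sphereFourier 0 t hpa]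
  exact cfc_congr fun x hx =>
    (sphereFourier_zero_eq_two_mul_cos_mul_sqrt (spectrum_nonneg_of_nonneg ha hx) t).symm

end FunctionalCalculus

theorem stmt2_general {R : Type*} [NormedRing R] [NormedAlgebra ℝ R] [CompleteSpace R] [StarRing R]
    [PartialOrder R] [StarOrderedRing R] [NonnegSpectrumClass ℝ R]
    [ContinuousFunctionalCalculus ℝ R IsSelfAdjoint] (m : ℕ) (hm : 1 ≤ m)
    (A : Fin (2 * m + 1) → R) (hsa : ∀ i, IsSelfAdjoint (A i))
    (hcomm : ∀ i j, Commute (A i) (A j)) (G : ℝ → R)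
    (hG : ∀ t : ℝ, G t = t ^ (2 * m - 1) •
      ∫ ω : Metric.sphere (0 : EuclideanSpace ℝ (Fin (2 * m + 1))) 1,
        (List.ofFn fun i =>
          cosSeries (t * (ω : EuclideanSpace ℝ (Fin (2 * m + 1))) i) (A i)).prod
        ∂(volume : Measure (EuclideanSpace ℝ (Fin (2 * m + 1)))).toSphere) :
    (∀ k < m, ∀ t ≠ 0, DifferentiableAt ℝ (Dop^[k] G) t) ∧
    ∀ t ≠ 0, cfc (fun x : ℝ => cos (t * √x)) (∑ i, A i ^ 2) =
      (1 / (2 * (2 * π) ^ m)) • deriv (Dop^[m - 1] G) t := by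
  set S := ∑ i, A i ^ 2
  have hS : 0 ≤ S := Finset.sum_nonneg fun i _ => (hsa i).sq_nonneg
  have hG' (n k : ℕ) (h : n + 2 * k + 2 = 2 * m) :
      G = fun t => t ^ (n + 2 * k + 1) • sphereFourier (n + 2 * k + 2) S t := by
    ext t
    rw [hG, integral_prod_cosSeries A hcomm, h, ← show 2 * m - 1 = n + 2 * k + 1 by omega]
  refine ⟨fun k hk t _ => ?_, fun t _ => ?_⟩
  · rw [hG' (2 * (m - 1 - k)) k (by omega)]
    exact (hasDerivAt_iterate_Dop_pow_smul_sphereFourier k _ S t).differentiableAt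
  · rw [hG' 0 (m - 1) (by omega), (hasDerivAt_iterate_Dop_pow_smul_sphereFourier _ 0 S t).deriv,
      ← two_smul_cfc_cos_mul_sqrt hS, Nat.sub_add_cancel hm, pow_zero, mul_one,
      smul_smul, smul_smul, mul_assoc, mul_comm (_ ^ m), one_div_mul_cancel (by positivity),
      one_smul]

theorem stmt2 {H : Type*} [NormedAddCommGroup H] [InnerProductSpace ℂ H] [CompleteSpace H]
    (m : ℕ) (hm : 1 ≤ m) (A : Fin (2*m+1) → (H →L[ℂ] H))
    (hsa : ∀ i, IsSelfAdjoint (A i))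
    (hcomm : ∀ i j, Commute (A i) (A j))
    (G : ℝ → (H →L[ℂ] H))
    (hG : ∀ t : ℝ, G t = t ^ (2*m-1) •
      ∫ ω : Metric.sphere (0 : EuclideanSpace ℝ (Fin (2*m+1))) 1,
        (List.ofFn (fun i : Fin (2*m+1) =>
          cosOp (t * (ω : EuclideanSpace ℝ (Fin (2*m+1))) i) (A i))).prod
        ∂((volume : Measure (EuclideanSpace ℝ (Fin (2*m+1)))).toSphere)) :
    (∀ k < m, ∀ t ∈ Set.Ioi (0:ℝ), DifferentiableAt ℝ (Dop^[k] G) t) ∧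
    ∀ t ∈ Set.Ioi (0:ℝ),
      cfc (fun x : ℝ => Real.cos (t * Real.sqrt x)) (∑ i, (A i)^2) =
        (1 / (2 * (2*π)^m)) • deriv (Dop^[m-1] G) t := by
  obtain ⟨hdiff, hcos⟩ := stmt2_general m hm A hsa hcomm G hG
  exact ⟨fun k hk t ht => hdiff k hk t ht.ne', fun t ht => hcos t ht.ne'⟩
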